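/- Suppose g is twice continuously differentiable (C²). Then for every y₀ ∈ ℝⁿ with Dg(y₀) ≠ 0, one has liminf_{y → y₀} tₛ(y) = liminf_{y → y₀} t̄ₛ(y) = t̄ₛ(y₀), where the liminfs are taken in the extended reals [0,∞] along the punctured neighborhood filter of y₀ (this also holds when t̄ₛ(y₀) = ∞). -/

import Mathlib

open scoped InnerProductSpace Topology ENNReal
open Filter

noncomputable section

/-- Euclidean space `ℝⁿ`. -/
abbrev Euc (n : ℕ) := EuclideanSpace ℝ (Fin n)

/-- Hopf–Lax solution of the Eikonal equation `uₜ + |∇u| = 0` with initial data `g`: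
`u(x,t) = min {g(y) : |y - x| ≤ t}`. -/
def HLu {n : ℕ} (g : Euc n → ℝ) (x : Euc n) (t : ℝ) : ℝ :=
  sInf (g '' Metric.closedBall x t)

/-- The set of minimizers `L(x,t) = {y : |y - x| ≤ t ∧ g y = u(x,t)}`. -/
def HLL {n : ℕ} (g : Euc n → ℝ) (x : Euc n) (t : ℝ) : Set (Euc n) :=
  {y | ‖y - x‖ ≤ t ∧ g y = HLu g x t}

/-- The characteristic from `y₀`: `X(y₀,t) = y₀ + t • Dg(y₀)/|Dg(y₀)|`. -/
def charX {n : ℕ} (Dg : Euc n → Euc n) (y₀ : Euc n) (t : ℝ) : Euc n :=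
  y₀ + t • (‖Dg y₀‖⁻¹ • Dg y₀)

/-- First termination time `t̄ₛ(y₀) = sup {t > 0 : L(X(y₀,t),t) = {y₀}}`, in `[0,∞]`
(`sup ∅ = 0`). -/
def tbar {n : ℕ} (g : Euc n → ℝ) (Dg : Euc n → Euc n) (y₀ : Euc n) : ℝ≥0∞ :=
  sSup (ENNReal.ofReal '' {t : ℝ | 0 < t ∧ HLL g (charX Dg y₀ t) t = {y₀}})

/-- Second termination time `tₛ(y₀) = inf {t > 0 : y₀ ∉ L(X(y₀,t),t)}`, in `[0,∞]`
(`inf ∅ = ∞`). -/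
def tsnd {n : ℕ} (g : Euc n → ℝ) (Dg : Euc n → Euc n) (y₀ : Euc n) : ℝ≥0∞ :=
  sInf (ENNReal.ofReal '' {t : ℝ | 0 < t ∧ y₀ ∉ HLL g (charX Dg y₀ t) t})

/-!
For `Dg y ≠ 0` the ball `|z - X(y,t)| ≤ t` is the ball of radius `t` touching `y` with inward normal
`Dg y`, so both termination times express how large this ball may be before `y` stops being a
(strict) minimizer of `g` on it.

*Upper bound.* If `y₀` is not a strict minimizer at radius `s`, some `z ≠ y₀` in that ball has
`g z ≤ g y₀`. For `t > s`, `z` is interior to the ball of radius `t`, hence lies in the ball of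
radius `t` touching a nearby `y`; since `y₀` is not critical, there are such `y` with `g y₀ < g y`.

*Lower bound.* If `y₀` is a strict minimizer at radius `t₁ > t`, then nearby `y` are strict
minimizers at radius `t`. By compactness only points `z` near `y₀` are delicate. There the increment
`h = z - y` is replaced by `h' = h + β • Dg y₀`, with `β` chosen such that
`⟪Dg y₀, h'⟫ = ⟪Dg y, h⟫ - c ‖h‖²` for a small constant `c > 0`. The gap between `t` and `t₁` puts
`y₀ + h'` in the larger ball at `y₀`, and Taylor's formula gives
`g z - g y = g (y₀ + h') - g y₀ + c ‖h‖² + o(‖h‖²)`, which is positive.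
-/

section Calculus

open Asymptotics

lemma tendsto_snd_sub_fst_nhds_diag {G : Type*} [AddGroup G] [TopologicalSpace G]
    [ContinuousSub G] (x : G) : Tendsto (fun q : G × G => q.2 - q.1) (𝓝 (x, x)) (𝓝 0) :=
  (continuous_snd.sub continuous_fst).tendsto' _ _ (sub_self x)

variable {E F : Type*} [NormedAddCommGroup E] [NormedSpace ℝ E]
  [NormedAddCommGroup F] [NormedSpace ℝ F]

lemma hasDerivAt_taylor_remainder_two {f : E → F} {f' : E → E →L[ℝ] F} (f'' : E →L[ℝ] E →L[ℝ] F)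
    {y h : E} {s : ℝ} (hf : HasFDerivAt f (f' (y + s • h)) (y + s • h)) :
    HasDerivAt (fun s : ℝ => f (y + s • h) - s • f' y h - (s ^ 2 / 2) • f'' h h)
      ((f' (y + s • h) - f' y - f'' (s • h)) h) s := by
  have line : HasDerivAt (fun s : ℝ => y + s • h) h s := by
    simpa using ((hasDerivAt_id s).smul_const h).const_add y
  have linear : HasDerivAt (fun s : ℝ => s • f' y h) (f' y h) s := by
    simpa using (hasDerivAt_id s).smul_const (f' y h)
  have quadratic : HasDerivAt (fun s : ℝ => (s ^ 2 / 2) • f'' h h) (s • f'' h h) s := by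
    simpa using ((hasDerivAt_pow 2 s).div_const 2).smul_const (f'' h h)
  simpa using! ((hf.comp_hasDerivAt s line).sub linear).sub quadratic

lemma isLittleO_taylor_two {f : E → F} {f' : E → E →L[ℝ] F} {f'' : E →L[ℝ] E →L[ℝ] F} {x : E}
    (hf : ∀ᶠ y in 𝓝 x, HasFDerivAt f (f' y) y) (hf' : HasStrictFDerivAt f' f'' x) :
    (fun q : E × E => f q.2 - f q.1 - f' q.1 (q.2 - q.1)
      - (1 / 2 : ℝ) • f'' (q.2 - q.1) (q.2 - q.1)) =o[𝓝 (x, x)] fun q => ‖q.2 - q.1‖ ^ 2 := by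
  refine IsLittleO.of_bound fun ε hε => ?_
  obtain ⟨δ, hδ, hball⟩ := Metric.eventually_nhds_iff_ball.1 hf
  obtain ⟨δ', hδ', hball'⟩ := Metric.eventually_nhds_iff_ball.1 (hf'.isLittleO.def hε)
  filter_upwards [Metric.ball_mem_nhds (x, x) (lt_min hδ hδ')] with ⟨y, z⟩ hyz
  rw [← ball_prod_same] at hyz
  have segment_mem : ∀ s ∈ Set.Icc (0 : ℝ) 1, y + s • (z - y) ∈ Metric.ball x (min δ δ') :=
    fun s hs => (convex_ball x _).add_smul_sub_mem hyz.1 hyz.2 hs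
  have deriv_bound : ∀ s ∈ Set.Ico (0 : ℝ) 1,
      ‖(f' (y + s • (z - y)) - f' y - f'' (s • (z - y))) (z - y)‖ ≤ ε * ‖z - y‖ ^ 2 := by
    intro s hs
    have hstrict := hball' (y + s • (z - y), y) <| by
      rw [← ball_prod_same]
      exact Set.prod_mono (Metric.ball_subset_ball (min_le_right _ _))
        (Metric.ball_subset_ball (min_le_right _ _))
        ⟨segment_mem s (Set.Ico_subset_Icc_self hs), hyz.1⟩
    simp only [add_sub_cancel_left] at hstrict
    calc _ ≤ (ε * ‖s • (z - y)‖) * ‖z - y‖ := ContinuousLinearMap.le_of_opNorm_le _ hstrict _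
      _ ≤ (ε * ‖z - y‖) * ‖z - y‖ := by
        gcongr
        rw [norm_smul, Real.norm_of_nonneg hs.1]
        exact mul_le_of_le_one_left (norm_nonneg _) hs.2.le
      _ = ε * ‖z - y‖ ^ 2 := by ring
  have hmean := norm_image_sub_le_of_norm_deriv_le_segment_01'
    (fun s hs => (hasDerivAt_taylor_remainder_two f'' (hball _
      (Metric.ball_subset_ball (min_le_left _ _) (segment_mem s hs)))).hasDerivWithinAt) deriv_bound
  simpa [sub_right_comm _ (f y)] using hmean

lemma frequently_lt_of_hasFDerivAt_ne_zero {f : E → ℝ} {f' : E →L[ℝ] ℝ} {x : E}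
    (hf : HasFDerivAt f f' x) (hf' : f' ≠ 0) : ∃ᶠ y in 𝓝[≠] x, f x < f y := by
  have hfreq : ∃ᶠ y in 𝓝 x, f x < f y := by
    by_contra hmax
    simp only [not_frequently, not_lt] at hmax
    exact hf' (IsLocalMax.hasFDerivAt_eq_zero hmax hf)
  exact frequently_nhdsWithin_iff.2 <| hfreq.mono fun y hy => ⟨hy, by rintro rfl; exact hy.false⟩

end Calculus

section InnerProduct

open Asymptotics

variable {E : Type*} [NormedAddCommGroup E] [InnerProductSpace ℝ E]

lemma isBigO_inner_norm_mul_norm {ι : Type*} (l : Filter ι) (u w : ι → E) :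
    (fun i => ⟪u i, w i⟫_ℝ) =O[l] fun i => ‖u i‖ * ‖w i‖ :=
  isBigO_of_le _ fun i => by simpa using norm_inner_le_norm (𝕜 := ℝ) (u i) (w i)

lemma isLittleO_inner_map_self_sub {ι : Type*} {l : Filter ι} {u w : ι → E} (A : E →L[ℝ] E)
    (huw : (fun i => u i - w i) =o[l] w) :
    (fun i => ⟪A (u i), u i⟫_ℝ - ⟪A (w i), w i⟫_ℝ) =o[l] fun i => ‖w i‖ ^ 2 := by
  have hu : u =O[l] w := by simpa using huw.isBigO.add (isBigO_refl w l)
  have hleft : (fun i => ⟪A (u i), u i - w i⟫_ℝ) =o[l] fun i => ‖w i‖ * ‖w i‖ :=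
    (isBigO_inner_norm_mul_norm _ _ _).trans_isLittleO
      (((A.isBigO_comp u l).trans hu).norm_norm.mul_isLittleO huw.norm_norm)
  have hright : (fun i => ⟪A (u i - w i), w i⟫_ℝ) =o[l] fun i => ‖w i‖ * ‖w i‖ :=
    (isBigO_inner_norm_mul_norm _ _ _).trans_isLittleO
      (((A.isBigO_comp _ l).trans_isLittleO huw).norm_norm.mul_isBigO (isBigO_refl _ l))
  refine (hleft.add hright).congr (fun i => ?_) fun i => (sq _).symm
  simp only [map_sub, inner_sub_left, inner_sub_right]
  ring

lemma isLittleO_taylor_two_gradient [CompleteSpace E] {g : E → ℝ} {Dg : E → E} {A : E →L[ℝ] E}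
    {y₀ : E} (hg : ∀ᶠ y in 𝓝 y₀, HasGradientAt g (Dg y) y) (hA : HasStrictFDerivAt Dg A y₀) :
    (fun q : E × E => g q.2 - g q.1 - ⟪Dg q.1, q.2 - q.1⟫_ℝ
      - 1 / 2 * ⟪A (q.2 - q.1), q.2 - q.1⟫_ℝ) =o[𝓝 (y₀, y₀)] fun q => ‖q.2 - q.1‖ ^ 2 := by
  have hf : ∀ᶠ y in 𝓝 y₀, HasFDerivAt g (innerSL ℝ (Dg y)) y :=
    hg.mono fun y hy => hy.hasFDerivAt
  simpa only [ContinuousLinearMap.comp_apply, innerSL_apply_apply, smul_eq_mul] using!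
    isLittleO_taylor_two hf ((innerSL ℝ).hasStrictFDerivAt.comp y₀ hA)

lemma contDiff_of_forall_hasGradientAt [CompleteSpace E] {g : E → ℝ} {Dg : E → E}
    {m k : WithTop ℕ∞} (hgk : ContDiff ℝ k g) (hg : ∀ y, HasGradientAt g (Dg y) y)
    (hmk : m + 1 ≤ k) : ContDiff ℝ m Dg := by
  have hDg : Dg = fun y => (InnerProductSpace.toDual ℝ E).symm (fderiv ℝ g y) := by
    rw [← gradient_eq hg]
    rfl
  rw [hDg]
  exact (InnerProductSpace.toDual ℝ E).symm.contDiff.comp (hgk.fderiv_right hmk)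

end InnerProduct

section StrictMin

variable {X β : Type*} [Preorder β] {f : X → β} {s t : Set X} {a : X}

/-- `a` is the strict minimizer of `f` on `s`: the strict counterpart of `IsMinOn`, which likewise
does not include `a ∈ s`. -/
def IsStrictMinOn (f : X → β) (s : Set X) (a : X) : Prop :=
  ∀ z ∈ s, z ≠ a → f a < f z

lemma IsStrictMinOn.mono (h : IsStrictMinOn f t a) (hst : s ⊆ t) : IsStrictMinOn f s a :=
  fun z hz => h z (hst hz)

lemma IsStrictMinOn.isMinOn (h : IsStrictMinOn f s a) : IsMinOn f s a := by
  intro z hz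
  obtain rfl | hza := eq_or_ne z a
  · exact le_refl (f z)
  · exact (h z hz hza).le

end StrictMin

section TangentBall

open NormedSpace (normalize)

variable {E : Type*} [NormedAddCommGroup E] [NormedSpace ℝ E] {V : E → E} {v y y₀ z : E}
  {s t : ℝ}

/-- The closed ball of radius `t` touching `y` with inward normal `v`; its centre is the point at
time `t` of the characteristic from `y` with gradient `v`. For `v = 0` it is centred at `y`. -/
def tangentBall (y v : E) (t : ℝ) : Set E :=
  Metric.closedBall (y + t • normalize v) t

lemma norm_normalize_le_one (v : E) : ‖normalize v‖ ≤ 1 :=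
  mem_closedBall_zero_iff.1 (inv_norm_smul_mem_unitClosedBall v)

lemma tangentBall_mono (hst : s ≤ t) : tangentBall y v s ⊆ tangentBall y v t := by
  refine Metric.closedBall_subset_closedBall' ?_
  have hcentres : dist (y + s • normalize v) (y + t • normalize v) ≤ t - s := by
    rw [dist_add_left, dist_comm, dist_eq_norm, ← sub_smul, norm_smul,
      Real.norm_of_nonneg (sub_nonneg.2 hst)]
    exact mul_le_of_le_one_right (sub_nonneg.2 hst) (norm_normalize_le_one v)
  linarith

lemma self_mem_tangentBall (ht : 0 ≤ t) : y ∈ tangentBall y v t :=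
  tangentBall_mono ht (by simp [tangentBall])

lemma tangentBall_subset_closedBall (ht : 0 ≤ t) :
    tangentBall y v t ⊆ Metric.closedBall y (2 * t) := by
  refine Metric.closedBall_subset_closedBall' ?_
  have hcentre := Metric.mem_closedBall'.1 (self_mem_tangentBall (y := y) (v := v) ht)
  linarith

lemma continuousAt_add_smul_normalize (hV : ContinuousAt V y₀) (hV₀ : V y₀ ≠ 0) (t : ℝ) :
    ContinuousAt (fun y => y + t • normalize (V y)) y₀ :=
  continuousAt_id.add <| continuousAt_const.smul <|
    (hV.norm.inv₀ (norm_ne_zero_iff.2 hV₀)).smul hV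

lemma eventually_notMem_tangentBall (hV : ContinuousAt V y₀) (hV₀ : V y₀ ≠ 0)
    (hz : z ∉ tangentBall y₀ (V y₀) t) :
    ∀ᶠ q in 𝓝 (y₀, z), q.2 ∉ tangentBall q.1 (V q.1) t := by
  have hdist : ContinuousAt (fun q : E × E => dist q.2 (q.1 + t • normalize (V q.1))) (y₀, z) :=
    continuousAt_snd.dist
      ((continuousAt_add_smul_normalize hV hV₀ t).comp_of_eq continuousAt_fst rfl)
  exact (hdist.eventually_const_lt (not_le.1 hz)).mono fun q hq => not_le.2 hq

end TangentBall

section TangentBallInner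

open NormedSpace (normalize)

variable {E : Type*} [NormedAddCommGroup E] [InnerProductSpace ℝ E] {V : E → E} {v y y₀ z : E}
  {s t : ℝ}

lemma dist_add_smul_normalize_sq (hv : v ≠ 0) : dist z (y + t • normalize v) ^ 2
    = ‖z - y‖ ^ 2 - 2 * t * ⟪normalize v, z - y⟫_ℝ + t ^ 2 := by
  rw [dist_eq_norm, ← sub_sub, norm_sub_sq_real, inner_smul_right, real_inner_comm, norm_smul,
    NormedSpace.norm_normalize_eq_one_iff.2 hv, mul_one, Real.norm_eq_abs, sq_abs]
  ring

lemma inner_eq_norm_mul_inner_normalize (v w : E) :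
    ⟪v, w⟫_ℝ = ‖v‖ * ⟪normalize v, w⟫_ℝ := by
  rw [← real_inner_smul_left, NormedSpace.norm_smul_normalize]

lemma mem_tangentBall_iff (hv : v ≠ 0) (ht : 0 ≤ t) :
    z ∈ tangentBall y v t ↔ ‖v‖ * ‖z - y‖ ^ 2 ≤ 2 * t * ⟪v, z - y⟫_ℝ := by
  rw [tangentBall, Metric.mem_closedBall, ← sq_le_sq₀ dist_nonneg ht,
    dist_add_smul_normalize_sq hv, inner_eq_norm_mul_inner_normalize v, mul_left_comm _ ‖v‖,
    mul_le_mul_iff_right₀ (norm_pos_iff.2 hv)]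
  constructor <;> intro <;> linarith

lemma mem_ball_of_mem_tangentBall (hv : v ≠ 0) (hs : 0 ≤ s) (hst : s < t) (hzy : z ≠ y)
    (hz : z ∈ tangentBall y v s) : z ∈ Metric.ball (y + t • normalize v) t := by
  have hpos : 0 < ‖z - y‖ := norm_pos_iff.2 (sub_ne_zero.2 hzy)
  have hle := (sq_le_sq₀ dist_nonneg hs).2 (Metric.mem_closedBall.1 hz)
  rw [dist_add_smul_normalize_sq hv] at hle
  have hinner : 0 < ⟪normalize v, z - y⟫_ℝ := by
    by_contra! hneg
    nlinarith
  rw [Metric.mem_ball, ← sq_lt_sq₀ dist_nonneg (hs.trans hst.le), dist_add_smul_normalize_sq hv]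
  nlinarith

lemma eventually_mem_tangentBall (hV : ContinuousAt V y₀) (hV₀ : V y₀ ≠ 0) (hs : 0 ≤ s)
    (hst : s < t) (hzy : z ≠ y₀) (hz : z ∈ tangentBall y₀ (V y₀) s) :
    ∀ᶠ y in 𝓝 y₀, z ∈ tangentBall y (V y) t := by
  have hdist : ContinuousAt (fun y => dist z (y + t • normalize (V y))) y₀ :=
    continuousAt_const.dist (continuousAt_add_smul_normalize hV hV₀ t)
  exact (hdist.eventually_lt_const (mem_ball_of_mem_tangentBall hV₀ hs hst hzy hz)).mono
    fun y hy => hy.le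

end TangentBallInner

section CorrectedIncrement

open Asymptotics

variable {E : Type*} [NormedAddCommGroup E] [InnerProductSpace ℝ E]
  {g : E → ℝ} {Dg : E → E} {A : E →L[ℝ] E} {y₀ : E} {c t t₁ : ℝ}

/-- The increment `h = z - y`, for `q = (y, z)`, shifted along `Dg y₀` so that its first-order
contribution at `y₀` is that of `h` at `y`, lowered by `c ‖h‖²`
(see `inner_correctedIncrement`). -/
def correctedIncrement (Dg : E → E) (y₀ : E) (c : ℝ) (q : E × E) : E :=
  q.2 - q.1 +
    ((⟪Dg q.1 - Dg y₀, q.2 - q.1⟫_ℝ - c * ‖q.2 - q.1‖ ^ 2) / ‖Dg y₀‖ ^ 2) • Dg y₀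

lemma inner_correctedIncrement (h₀ : Dg y₀ ≠ 0) (q : E × E) :
    ⟪Dg y₀, correctedIncrement Dg y₀ c q⟫_ℝ
      = ⟪Dg q.1, q.2 - q.1⟫_ℝ - c * ‖q.2 - q.1‖ ^ 2 := by
  have hnorm : ‖Dg y₀‖ ^ 2 ≠ 0 := pow_ne_zero 2 (norm_ne_zero_iff.2 h₀)
  rw [correctedIncrement, inner_add_right, inner_smul_right, real_inner_self_eq_norm_sq,
    div_mul_cancel₀ _ hnorm, inner_sub_left]
  ring

lemma isLittleO_correctedIncrement_sub (hD : ContinuousAt Dg y₀) (c : ℝ) :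
    (fun q => correctedIncrement Dg y₀ c q - (q.2 - q.1))
      =o[𝓝 (y₀, y₀)] fun q : E × E => q.2 - q.1 := by
  have hDg : Tendsto (fun q : E × E => Dg q.1 - Dg y₀) (𝓝 (y₀, y₀)) (𝓝 0) := by
    simpa using! (hD.tendsto.comp (continuous_fst.tendsto' (y₀, y₀) y₀ rfl)).sub_const (Dg y₀)
  have hfirst : (fun q : E × E => ⟪Dg q.1 - Dg y₀, q.2 - q.1⟫_ℝ)
      =o[𝓝 (y₀, y₀)] fun q => ‖q.2 - q.1‖ :=
    ((isBigO_inner_norm_mul_norm _ _ _).trans_isLittleO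
      (((isLittleO_one_iff ℝ).2 hDg).norm_left.mul_isBigO (isBigO_refl _ _))).congr_right
        fun q => one_mul _
  have hsecond : (fun q : E × E => c * ‖q.2 - q.1‖ ^ 2)
      =o[𝓝 (y₀, y₀)] fun q => ‖q.2 - q.1‖ :=
    (((isLittleO_norm_pow_id one_lt_two).comp_tendsto
      (tendsto_snd_sub_fst_nhds_diag y₀)).const_mul_left c).norm_right
  have hcoeff := ((hfirst.sub hsecond).const_mul_left (‖Dg y₀‖ ^ 2)⁻¹).smul_isBigO
    (isBigO_const_const (Dg y₀) (one_ne_zero (α := ℝ)) (𝓝 (y₀, y₀)))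
  refine (hcoeff.congr (fun q => ?_) fun q => mul_one _).of_norm_right
  rw [correctedIncrement, add_sub_cancel_left, div_eq_inv_mul]

lemma tendsto_correctedIncrement (hD : ContinuousAt Dg y₀) (c : ℝ) :
    Tendsto (correctedIncrement Dg y₀ c) (𝓝 (y₀, y₀)) (𝓝 0) := by
  have hincr := tendsto_snd_sub_fst_nhds_diag y₀
  simpa using ((isLittleO_correctedIncrement_sub hD c).isBigO.trans_tendsto hincr).add hincr

lemma isLittleO_increment_comparison [CompleteSpace E]
    (hg : ∀ᶠ y in 𝓝 y₀, HasGradientAt g (Dg y) y) (hA : HasStrictFDerivAt Dg A y₀)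
    (h₀ : Dg y₀ ≠ 0) (c : ℝ) :
    (fun q : E × E => g q.2 - g q.1
      - (g (y₀ + correctedIncrement Dg y₀ c q) - g y₀ + c * ‖q.2 - q.1‖ ^ 2))
      =o[𝓝 (y₀, y₀)] fun q => ‖q.2 - q.1‖ ^ 2 := by
  have hD := hA.continuousAt
  have hsub := isLittleO_correctedIncrement_sub hD c
  have hbigO : correctedIncrement Dg y₀ c =O[𝓝 (y₀, y₀)] fun q : E × E => q.2 - q.1 := by
    simpa using hsub.isBigO.add (isBigO_refl _ _)
  have htaylor := isLittleO_taylor_two_gradient hg hA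
  have htendsto : Tendsto (fun q => (y₀, y₀ + correctedIncrement Dg y₀ c q))
      (𝓝 (y₀, y₀)) (𝓝 (y₀, y₀)) := by
    simpa using tendsto_const_nhds.prodMk_nhds
      ((tendsto_correctedIncrement hD c).const_add y₀)
  have htaylor₀ := (htaylor.comp_tendsto htendsto).trans_isBigO <| by
    simpa [Function.comp_def] using hbigO.norm_norm.pow 2
  have hquad := (isLittleO_inner_map_self_sub A hsub).const_mul_left (1 / 2)
  refine ((htaylor.sub htaylor₀).sub hquad).congr_left fun q => ?_
  simp only [Function.comp_apply, add_sub_cancel_left, inner_correctedIncrement h₀]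
  ring

lemma eventually_add_correctedIncrement_mem_tangentBall (hD : ContinuousAt Dg y₀)
    (h₀ : Dg y₀ ≠ 0) (ht : 0 < t) (ht₁ : 0 < t₁) (hc : ‖Dg y₀‖ / t₁ + 2 * c < ‖Dg y₀‖ / t) :
    ∀ᶠ q in 𝓝 (y₀, y₀), q.2 ∈ tangentBall q.1 (Dg q.1) t →
      y₀ + correctedIncrement Dg y₀ c q ∈ tangentBall y₀ (Dg y₀) t₁ := by
  obtain ⟨r, hr, hr'⟩ := exists_between hc
  have hcontDg : ContinuousAt (fun q : E × E => Dg q.1) (y₀, y₀) :=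
    hD.comp_of_eq continuousAt_fst rfl
  have hnormSq : ∀ᶠ q : E × E in 𝓝 (y₀, y₀),
      ‖Dg y₀‖ / t₁ * ‖correctedIncrement Dg y₀ c q‖ ^ 2 ≤ (r - 2 * c) * ‖q.2 - q.1‖ ^ 2 := by
    have hquad := (isLittleO_inner_map_self_sub (ContinuousLinearMap.id ℝ E)
      (isLittleO_correctedIncrement_sub hD c)).const_mul_left (‖Dg y₀‖ / t₁)
    filter_upwards [hquad.def (show 0 < r - 2 * c - ‖Dg y₀‖ / t₁ by linarith)] with q hq
    simp only [ContinuousLinearMap.id_apply, real_inner_self_eq_norm_sq, norm_pow,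
      norm_norm] at hq
    linarith [(le_abs_self _).trans hq]
  filter_upwards [hnormSq, hcontDg.eventually_ne h₀,
    (hcontDg.norm.div_const t).eventually_const_lt hr'] with q hq hq₀ hqr hqmem
  rw [mem_tangentBall_iff hq₀ ht.le] at hqmem
  rw [mem_tangentBall_iff h₀ ht₁.le, add_sub_cancel_left, inner_correctedIncrement h₀]
  have hinner : r * ‖q.2 - q.1‖ ^ 2 ≤ 2 * ⟪Dg q.1, q.2 - q.1⟫_ℝ := by
    calc r * ‖q.2 - q.1‖ ^ 2 ≤ ‖Dg q.1‖ / t * ‖q.2 - q.1‖ ^ 2 := by gcongr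
      _ = ‖Dg q.1‖ * ‖q.2 - q.1‖ ^ 2 / t := by ring
      _ ≤ 2 * ⟪Dg q.1, q.2 - q.1⟫_ℝ := by rw [div_le_iff₀ ht]; linarith
  calc ‖Dg y₀‖ * ‖correctedIncrement Dg y₀ c q‖ ^ 2
      = t₁ * (‖Dg y₀‖ / t₁ * ‖correctedIncrement Dg y₀ c q‖ ^ 2) := by field_simp
    _ ≤ t₁ * ((r - 2 * c) * ‖q.2 - q.1‖ ^ 2) := by gcongr
    _ ≤ t₁ * (2 * (⟪Dg q.1, q.2 - q.1⟫_ℝ - c * ‖q.2 - q.1‖ ^ 2)) := by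
      refine mul_le_mul_of_nonneg_left ?_ ht₁.le
      linarith
    _ = 2 * t₁ * (⟪Dg q.1, q.2 - q.1⟫_ℝ - c * ‖q.2 - q.1‖ ^ 2) := by ring

lemma eventually_lt_of_isMinOn_tangentBall [CompleteSpace E]
    (hg : ∀ᶠ y in 𝓝 y₀, HasGradientAt g (Dg y) y) (hA : HasStrictFDerivAt Dg A y₀)
    (h₀ : Dg y₀ ≠ 0) (ht : 0 < t) (htt₁ : t < t₁)
    (hmin : IsMinOn g (tangentBall y₀ (Dg y₀) t₁) y₀) :
    ∀ᶠ q in 𝓝 (y₀, y₀), q.2 ∈ tangentBall q.1 (Dg q.1) t → q.2 ≠ q.1 → g q.1 < g q.2 := by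
  obtain ⟨c, hc, hc'⟩ : ∃ c > 0, ‖Dg y₀‖ / t₁ + 2 * c < ‖Dg y₀‖ / t := by
    have hgap : ‖Dg y₀‖ / t₁ < ‖Dg y₀‖ / t := div_lt_div_of_pos_left (norm_pos_iff.2 h₀) ht htt₁
    exact ⟨(‖Dg y₀‖ / t - ‖Dg y₀‖ / t₁) / 4, by linarith, by linarith⟩
  filter_upwards [(isLittleO_increment_comparison hg hA h₀ c).def (half_pos hc),
    eventually_add_correctedIncrement_mem_tangentBall hA.continuousAt h₀ ht (ht.trans htt₁) hc']
    with q hcomparison hmem hq hne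
  have hminq : g y₀ ≤ g (y₀ + correctedIncrement Dg y₀ c q) := hmin (hmem hq)
  have hpos : 0 < c * ‖q.2 - q.1‖ ^ 2 :=
    mul_pos hc (pow_pos (norm_pos_iff.2 (sub_ne_zero.2 hne)) 2)
  rw [norm_pow, norm_norm] at hcomparison
  linarith [(abs_le.1 hcomparison).1]

end CorrectedIncrement

section Stability

variable {E : Type*} [NormedAddCommGroup E] [InnerProductSpace ℝ E] [FiniteDimensional ℝ E]
  {g : E → ℝ} {Dg : E → E} {A : E →L[ℝ] E} {y₀ : E} {t t₁ : ℝ}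

lemma eventually_isStrictMinOn_tangentBall (hgl : LowerSemicontinuous g)
    (hg : ∀ᶠ y in 𝓝 y₀, HasGradientAt g (Dg y) y) (hA : HasStrictFDerivAt Dg A y₀)
    (h₀ : Dg y₀ ≠ 0) (ht : 0 < t) (htt₁ : t < t₁)
    (hmin : IsStrictMinOn g (tangentBall y₀ (Dg y₀) t₁) y₀) :
    ∀ᶠ y in 𝓝 y₀, IsStrictMinOn g (tangentBall y (Dg y) t) y := by
  have hpair : ∀ z, ∀ᶠ q in 𝓝 (y₀, z),
      q.2 ∈ tangentBall q.1 (Dg q.1) t → q.2 ≠ q.1 → g q.1 < g q.2 := by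
    intro z
    obtain rfl | hzy := eq_or_ne z y₀
    · exact eventually_lt_of_isMinOn_tangentBall hg hA h₀ ht htt₁ hmin.isMinOn
    by_cases hz : z ∈ tangentBall y₀ (Dg y₀) t
    · obtain ⟨r, hr, hr'⟩ := exists_between (hmin z (tangentBall_mono htt₁.le hz) hzy)
      have hgy : ∀ᶠ y in 𝓝 y₀, g y < r :=
        hg.self_of_nhds.continuousAt.eventually_lt_const hr
      filter_upwards [hgy.prod_nhds (hgl z r hr')] with q hq _ _
      exact hq.1.trans hq.2
    · filter_upwards [eventually_notMem_tangentBall hA.continuousAt h₀ hz] with q hq hq'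
      exact absurd hq' hq
  have hcompact := (isCompact_closedBall y₀ (2 * t + 1)).eventually_forall_of_forall_eventually
    (P := fun y z => z ∈ tangentBall y (Dg y) t → z ≠ y → g y < g z) fun z _ => hpair z
  filter_upwards [hcompact, Metric.ball_mem_nhds y₀ one_pos] with y hy hy₀ z hz
  refine hy z ?_ hz
  have hzy := Metric.mem_closedBall.1 (tangentBall_subset_closedBall ht.le hz)
  exact (dist_triangle z y y₀).trans (add_le_add hzy (Metric.mem_ball.1 hy₀).le)

end Stability

section TerminationTimes

variable {n : ℕ} {g : Euc n → ℝ} {Dg : Euc n → Euc n} {A : Euc n →L[ℝ] Euc n} {x y y₀ : Euc n}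
  {t : ℝ}

lemma mem_HLL_iff (hgl : LowerSemicontinuous g) :
    y ∈ HLL g x t ↔ y ∈ Metric.closedBall x t ∧ IsMinOn g (Metric.closedBall x t) y := by
  have hbdd : BddBelow (g '' Metric.closedBall x t) :=
    (hgl.lowerSemicontinuousOn _).bddBelow_of_isCompact (isCompact_closedBall x t)
  rw [HLL, Set.mem_ofPred_eq, ← dist_eq_norm, ← Metric.mem_closedBall]
  refine and_congr_right fun hy => ⟨fun hgy z hz => ?_, fun hmin => ?_⟩
  · exact hgy.trans_le (csInf_le hbdd (Set.mem_image_of_mem g hz))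
  · refine le_antisymm (le_csInf ⟨_, Set.mem_image_of_mem g hy⟩ ?_)
      (csInf_le hbdd (Set.mem_image_of_mem g hy))
    exact Set.forall_mem_image.2 hmin

lemma HLL_eq_singleton_iff (hgl : LowerSemicontinuous g) (hy : y ∈ Metric.closedBall x t) :
    HLL g x t = {y} ↔ IsStrictMinOn g (Metric.closedBall x t) y := by
  constructor
  · intro hHLL z hz hzy
    have hmin := ((mem_HLL_iff hgl).1 (hHLL ▸ Set.mem_singleton y)).2
    by_contra! hle
    have hzmem : z ∈ HLL g x t := (mem_HLL_iff hgl).2 ⟨hz, fun w hw => hle.trans (hmin hw)⟩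
    exact hzy (by rwa [hHLL] at hzmem)
  · intro hstrict
    refine Set.eq_singleton_iff_unique_mem.2
      ⟨(mem_HLL_iff hgl).2 ⟨hy, hstrict.isMinOn⟩, fun z hz => ?_⟩
    obtain ⟨hzball, hzmin⟩ := (mem_HLL_iff hgl).1 hz
    by_contra hzy
    exact (hstrict z hzball hzy).not_ge (hzmin hy)

lemma tbar_eq_sSup (hgl : LowerSemicontinuous g) (Dg : Euc n → Euc n) (y : Euc n) :
    tbar g Dg y = sSup (ENNReal.ofReal ''
      {t | 0 < t ∧ IsStrictMinOn g (tangentBall y (Dg y) t) y}) := by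
  have hset : {t : ℝ | 0 < t ∧ HLL g (charX Dg y t) t = {y}}
      = {t | 0 < t ∧ IsStrictMinOn g (tangentBall y (Dg y) t) y} :=
    Set.ext fun t => and_congr_right fun ht =>
      HLL_eq_singleton_iff hgl (self_mem_tangentBall ht.le)
  rw [tbar, hset]

lemma tsnd_eq_sInf (hgl : LowerSemicontinuous g) (Dg : Euc n → Euc n) (y : Euc n) :
    tsnd g Dg y = sInf (ENNReal.ofReal ''
      {t | 0 < t ∧ ¬ IsMinOn g (tangentBall y (Dg y) t) y}) := by
  have hset : {t : ℝ | 0 < t ∧ y ∉ HLL g (charX Dg y t) t}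
      = {t | 0 < t ∧ ¬ IsMinOn g (tangentBall y (Dg y) t) y} :=
    Set.ext fun t => and_congr_right fun ht => not_congr <|
      (mem_HLL_iff hgl).trans (and_iff_right (self_mem_tangentBall ht.le))
  rw [tsnd, hset]

lemma ofReal_le_tbar (hgl : LowerSemicontinuous g) (ht : 0 < t)
    (hmin : IsStrictMinOn g (tangentBall y (Dg y) t) y) : ENNReal.ofReal t ≤ tbar g Dg y := by
  rw [tbar_eq_sSup hgl]
  exact le_sSup (Set.mem_image_of_mem _ ⟨ht, hmin⟩)

lemma exists_isStrictMinOn_of_ofReal_lt_tbar (hgl : LowerSemicontinuous g)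
    (ht : ENNReal.ofReal t < tbar g Dg y) :
    ∃ t₁ > t, IsStrictMinOn g (tangentBall y (Dg y) t₁) y := by
  rw [tbar_eq_sSup hgl] at ht
  obtain ⟨_, ⟨t₁, ⟨ht₁, hmin⟩, rfl⟩, hlt⟩ := lt_sSup_iff.1 ht
  exact ⟨t₁, (ENNReal.ofReal_lt_ofReal_iff ht₁).1 hlt, hmin⟩

lemma tsnd_le_ofReal (hgl : LowerSemicontinuous g) (ht : 0 < t)
    (hmin : ¬ IsMinOn g (tangentBall y (Dg y) t) y) : tsnd g Dg y ≤ ENNReal.ofReal t := by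
  rw [tsnd_eq_sInf hgl]
  exact sInf_le (Set.mem_image_of_mem _ ⟨ht, hmin⟩)

lemma tbar_le_tsnd (hgl : LowerSemicontinuous g) (Dg : Euc n → Euc n) (y : Euc n) :
    tbar g Dg y ≤ tsnd g Dg y := by
  rw [tsnd_eq_sInf hgl]
  refine le_sInf <| Set.forall_mem_image.2 fun t ht => ?_
  by_contra! hlt
  obtain ⟨t₁, ht₁, hmin⟩ := exists_isStrictMinOn_of_ofReal_lt_tbar hgl hlt
  exact ht.2 (hmin.mono (tangentBall_mono ht₁.le)).isMinOn

lemma liminf_tsnd_le_tbar (hgl : LowerSemicontinuous g) (hg : HasGradientAt g (Dg y₀) y₀)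
    (hD : ContinuousAt Dg y₀) (h₀ : Dg y₀ ≠ 0) :
    liminf (tsnd g Dg) (𝓝[≠] y₀) ≤ tbar g Dg y₀ := by
  by_contra! hlt
  obtain ⟨t, -, htbar, ht⟩ := ENNReal.lt_iff_exists_real_btwn.1 hlt
  obtain ⟨s, hs, hsbar, hst⟩ := ENNReal.lt_iff_exists_real_btwn.1 htbar
  have hs0 : 0 < s := ENNReal.ofReal_pos.1 (bot_le.trans_lt hsbar)
  have hst' : s < t := (ENNReal.ofReal_lt_ofReal_iff_of_nonneg hs).1 hst
  have hnot : ¬ IsStrictMinOn g (tangentBall y₀ (Dg y₀) s) y₀ :=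
    fun hmin => (ofReal_le_tbar hgl hs0 hmin).not_gt hsbar
  simp only [IsStrictMinOn, not_forall, not_lt] at hnot
  obtain ⟨z, hz, hzy, hgz⟩ := hnot
  have hmem : ∀ᶠ y in 𝓝[≠] y₀, z ∈ tangentBall y (Dg y) t :=
    (eventually_mem_tangentBall hD h₀ hs hst' hzy hz).filter_mono nhdsWithin_le_nhds
  have hfreq : ∃ᶠ y in 𝓝[≠] y₀, g y₀ < g y :=
    frequently_lt_of_hasFDerivAt_ne_zero hg.hasFDerivAt (by simpa using h₀)
  refine (liminf_le_of_frequently_le' ((hfreq.and_eventually hmem).mono ?_)).not_gt ht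
  rintro y ⟨hgy, hzmem⟩
  exact tsnd_le_ofReal hgl (hs0.trans hst') fun hmin => (hmin hzmem).not_gt (hgz.trans_lt hgy)

lemma lowerSemicontinuousAt_tbar (hgl : LowerSemicontinuous g)
    (hg : ∀ᶠ y in 𝓝 y₀, HasGradientAt g (Dg y) y) (hA : HasStrictFDerivAt Dg A y₀)
    (h₀ : Dg y₀ ≠ 0) : LowerSemicontinuousAt (tbar g Dg) y₀ := by
  intro a ha
  obtain ⟨t, -, hat, ht⟩ := ENNReal.lt_iff_exists_real_btwn.1 ha
  have ht0 : 0 < t := ENNReal.ofReal_pos.1 (bot_le.trans_lt hat)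
  obtain ⟨t₁, htt₁, hmin⟩ := exists_isStrictMinOn_of_ofReal_lt_tbar hgl ht
  filter_upwards [eventually_isStrictMinOn_tangentBall hgl hg hA h₀ ht0 htt₁ hmin] with y hy
  exact hat.trans_le (ofReal_le_tbar hgl ht0 hy)

end TerminationTimes

theorem liminf_termination_times_of_C2_general {n : ℕ} {g : Euc n → ℝ} {Dg : Euc n → Euc n}
    {A : Euc n →L[ℝ] Euc n} {y₀ : Euc n} (hgl : LowerSemicontinuous g)
    (hg : ∀ᶠ y in 𝓝 y₀, HasGradientAt g (Dg y) y) (hA : HasStrictFDerivAt Dg A y₀)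
    (h₀ : Dg y₀ ≠ 0) :
    liminf (tsnd g Dg) (𝓝[≠] y₀) = tbar g Dg y₀ ∧
    liminf (tbar g Dg) (𝓝[≠] y₀) = tbar g Dg y₀ := by
  have hupper := liminf_tsnd_le_tbar hgl hg.self_of_nhds hA.continuousAt h₀
  have hlower : tbar g Dg y₀ ≤ liminf (tbar g Dg) (𝓝[≠] y₀) :=
    (lowerSemicontinuousAt_tbar hgl hg hA h₀).le_liminf.trans
      (liminf_le_liminf_of_le nhdsWithin_le_nhds)
  have hcompare : liminf (tbar g Dg) (𝓝[≠] y₀) ≤ liminf (tsnd g Dg) (𝓝[≠] y₀) :=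
    liminf_le_liminf (.of_forall (tbar_le_tsnd hgl Dg))
  exact ⟨hupper.antisymm (hlower.trans hcompare), (hcompare.trans hupper).antisymm hlower⟩

theorem liminf_termination_times_of_C2 {n : ℕ} (hn : 0 < n) (g : Euc n → ℝ) (Dg : Euc n → Euc n)
    (hg2 : ContDiff ℝ 2 g) (hg : ∀ y, HasGradientAt g (Dg y) y)
    (y₀ : Euc n) (hy : Dg y₀ ≠ 0) :
    Filter.liminf (fun y => tsnd g Dg y) (𝓝[≠] y₀) = tbar g Dg y₀ ∧
    Filter.liminf (fun y => tbar g Dg y) (𝓝[≠] y₀) = tbar g Dg y₀ :=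
  have hDg : ContDiff ℝ 1 Dg := contDiff_of_forall_hasGradientAt hg2 hg one_add_one_eq_two.le
  liminf_termination_times_of_C2_general hg2.continuous.lowerSemicontinuous (.of_forall hg)
    (hDg.hasStrictFDerivAt one_ne_zero) hy
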